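/- arXiv:1710.08953 — 2 statements merged into one kernel-verified Lean document; each statement's English description precedes it below -/
import Mathlib

section
/- For every finite threshold graph G with at least one vertex, the number of maximum independent sets of G (independent sets of largest cardinality) is at most ω(G), the clique number of G. -/
/-- A set of vertices is independent in `G` if no two of its vertices are adjacent. -/
def SimpleGraph.IsIndep {V : Type*} (G : SimpleGraph V) (S : Set V) : Prop :=
  S.Pairwise fun u v => ¬ G.Adj u v

/-- A threshold graph: there are nonnegative vertex weights and a nonnegative
threshold `T` such that a set of vertices is independent iff its total weight
is at most `T`. -/
def SimpleGraph.IsThreshold {V : Type} [Fintype V] (G : SimpleGraph V) : Prop :=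
  ∃ (w : V → ℝ) (T : ℝ), (∀ v, 0 ≤ w v) ∧ 0 ≤ T ∧
    ∀ U : Finset V, ((∑ v ∈ U, w v) ≤ T ↔ G.IsIndep (↑U : Set V))

/-- A maximum independent set of `G`: an independent set of largest cardinality. -/
def SimpleGraph.IsMaximumIndep {V : Type} [Fintype V] (G : SimpleGraph V) (S : Set V) : Prop :=
  G.IsIndep S ∧ ∀ T : Set V, G.IsIndep T → T.ncard ≤ S.ncard

/-! Send each maximum independent set to one of its heaviest vertices. If the heaviest vertices
`x ∈ S` and `y ∈ S'` are not adjacent, then an edge from `S` to `S'` could be pushed up to an edge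
from `x` to `y`, so `S ∪ S'` is independent and maximality forces `S = S'`. Hence distinct maximum
independent sets have adjacent heaviest vertices, and these vertices form a clique. -/

section Graph

variable {V α : Type*} {G : SimpleGraph V}

instance symm_not_adj (G : SimpleGraph V) : Std.Symm fun u v => ¬ G.Adj u v where
  symm _ _ huv hvu := huv hvu.symm

theorem isIndep_pair_iff {u v : V} (huv : u ≠ v) : G.IsIndep {u, v} ↔ ¬ G.Adj u v :=
  Set.pairwise_pair_of_symm.trans (forall_prop_of_true huv)

/-- Vertices are ordered by `w` consistently with the vicinal preorder of `G`: moving an endpoint of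
an edge to a vertex of at least the same weight gives an edge again. The condition `z ≠ v` excludes
the move that would produce a loop. -/
def IsVicinallyMonotone [LE α] (G : SimpleGraph V) (w : V → α) : Prop :=
  ∀ ⦃u v z : V⦄, w u ≤ w v → z ≠ v → G.Adj u z → G.Adj v z

theorem isVicinallyMonotone_of_adj_iff_lt_add [Add α] [Preorder α] [AddRightMono α]
    {w : V → α} {T : α} (hadj : ∀ u v, u ≠ v → (G.Adj u v ↔ T < w u + w v)) :
    IsVicinallyMonotone G w := by
  intro u v z huv hzv huz
  rw [hadj v z hzv.symm]
  calc
    T < w u + w z := (hadj u z huz.ne).1 huz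
    _ ≤ w v + w z := by gcongr

theorem IsVicinallyMonotone.isIndep_union [Preorder α] {w : V → α}
    (hw : IsVicinallyMonotone G w) {S S' : Set V} {x y : V}
    (hS : G.IsIndep S) (hx : x ∈ S) (hxmax : IsMaxOn w S x)
    (hS' : G.IsIndep S') (hy : y ∈ S') (hymax : IsMaxOn w S' y) (hxy : ¬ G.Adj x y) :
    G.IsIndep (S ∪ S') := by
  refine Set.pairwise_union_of_symm.2 ⟨hS, hS', fun u hu v hv _ huv => ?_⟩
  have hvx : v ≠ x := by
    rintro rfl
    exact hS hu hx huv.ne huv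
  have hxv : G.Adj x v := hw (hxmax hu) hvx huv
  have hne : x ≠ y := by
    rintro rfl
    exact hS' hy hv hxv.ne hxv
  exact hxy (hw (hymax hv) hne hxv.symm).symm

theorem ncard_le_cliqueNum_of_pairwise_adj [Finite V] {ι : Type*} {s : Set ι} {f : ι → V}
    (hf : s.Pairwise fun i j => G.Adj (f i) (f j)) : s.ncard ≤ G.cliqueNum := by
  have hinj : Set.InjOn f s := fun i hi j hj hij =>
    by_contra fun hne => (hf hi hj hne).ne hij
  have hclique : G.IsClique (f '' s) := hinj.pairwise_image.2 hf
  have hfin : (f '' s).Finite := Set.toFinite _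
  rw [← hinj.ncard_image, Set.ncard_eq_toFinset_card _ hfin]
  rw [← hfin.coe_toFinset] at hclique
  exact hclique.card_le_cliqueNum

end Graph

section MaximumIndep

variable {V : Type} [Fintype V] {G : SimpleGraph V}

theorem exists_adj_iff_lt_add_of_isThreshold (hG : G.IsThreshold) :
    ∃ (w : V → ℝ) (T : ℝ), ∀ u v, u ≠ v → (G.Adj u v ↔ T < w u + w v) := by
  classical
  obtain ⟨w, T, -, -, hsum⟩ := hG
  refine ⟨w, T, fun u v huv => ?_⟩
  rw [← not_le, ← Finset.sum_pair huv, hsum, Finset.coe_pair, isIndep_pair_iff huv, not_not]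

theorem nonempty_of_isMaximumIndep [Nonempty V] {S : Set V} (hS : G.IsMaximumIndep S) :
    S.Nonempty := by
  obtain ⟨v⟩ := ‹Nonempty V›
  have hcard : ({v} : Set V).ncard ≤ S.ncard := hS.2 {v} (Set.pairwise_singleton _ _)
  rw [Set.ncard_singleton] at hcard
  exact Set.nonempty_of_ncard_ne_zero (Nat.one_le_iff_ne_zero.1 hcard)

theorem eq_of_isMaximumIndep_of_subset {S U : Set V} (hS : G.IsMaximumIndep S)
    (hU : G.IsIndep U) (hSU : S ⊆ U) : S = U :=
  Set.eq_of_subset_of_ncard_le hSU (hS.2 U hU)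

end MaximumIndep

/-- a finite threshold graph with at least one vertex has at most
`ω(G)` maximum independent sets. -/
theorem threshold_graph_numMaximumIndep_le_cliqueNum
    {V : Type} [Fintype V] [Nonempty V] (G : SimpleGraph V) (hG : G.IsThreshold) :
    {S : Set V | G.IsMaximumIndep S}.ncard ≤ G.cliqueNum := by
  obtain ⟨w, T, hadj⟩ := exists_adj_iff_lt_add_of_isThreshold hG
  have hw : IsVicinallyMonotone G w := isVicinallyMonotone_of_adj_iff_lt_add hadj
  have hheaviest : ∀ S, G.IsMaximumIndep S → ∃ x ∈ S, IsMaxOn w S x := fun S hS =>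
    S.exists_max_image w S.toFinite (nonempty_of_isMaximumIndep hS)
  choose! heaviest hmem hmax using hheaviest
  refine ncard_le_cliqueNum_of_pairwise_adj (f := heaviest) fun S hS S' hS' hne => ?_
  by_contra hnadj
  have hunion : G.IsIndep (S ∪ S') :=
    hw.isIndep_union hS.1 (hmem S hS) (hmax S hS) hS'.1 (hmem S' hS') (hmax S' hS') hnadj
  exact hne <| (eq_of_isMaximumIndep_of_subset hS hunion Set.subset_union_left).trans
    (eq_of_isMaximumIndep_of_subset hS' hunion Set.subset_union_right).symm
end

section
/- Let G = (V,E) be a finite simple graph with at least one vertex whose edge set is the union E = E_1 ∪ … ∪ E_k of the edge sets of threshold graphs G_1 = (V,E_1), …, G_k = (V,E_k). Then the number of maximal independent sets of G is at most the product ω(G_1)·ω(G_2)···ω(G_k) of the clique numbers of the covering threshold graphs. -/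
/-- The number of maximal independent sets of `G`. -/
noncomputable def numMaximalIndep {V : Type} [Fintype V] (G : SimpleGraph V) : ℕ :=
  {S : Set V | Maximal G.IsIndep S}.ncard

/-!
Every maximal independent set of `⋃ Gᵢ` is an intersection `⋂ Rᵢ` with `Rᵢ` maximal independent in
`Gᵢ`, so it suffices to bound the number of maximal independent sets of one threshold graph by its
clique number. A maximal independent set of a threshold graph is determined by any heaviest vertex
`m` of it, as the set of non-neighbours of `m` of weight at most that of `m`. Since neighbourhoods
grow with weight, the heaviest vertices chosen from distinct maximal independent sets are pairwise
adjacent, so they form a clique.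
-/

theorem encard_maximal_forall_le_prod {ι α : Type*} [Fintype ι] [SemilatticeInf α] [OrderTop α]
    [WellFoundedGT α] {P : ι → α → Prop} (hP : ∀ i, Antitone (P i)) :
    {a | Maximal (fun a => ∀ i, P i a) a}.encard ≤ ∏ i, {a | Maximal (P i) a}.encard := by
  have maximal_subset_image : {a | Maximal (fun a => ∀ i, P i a) a} ⊆
      Finset.univ.inf '' Set.univ.pi fun i => {a | Maximal (P i) a} := by
    intro a (ha : Maximal (fun a => ∀ i, P i a) a)
    choose b hab hb using fun i => exists_maximal_ge_of_wellFoundedGT (P i) a (ha.prop i)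
    refine ⟨b, fun i _ => hb i, (ha.eq_of_le (fun i => ?_) ?_).symm⟩
    · exact hP i (Finset.inf_le (Finset.mem_univ i)) (hb i).prop
    · exact Finset.le_inf fun i _ => hab i
  calc {a | Maximal (fun a => ∀ i, P i a) a}.encard
      ≤ (Set.univ.pi fun i => {a | Maximal (P i) a}).encard :=
        (Set.encard_le_encard maximal_subset_image).trans (Set.encard_image_le _ _)
    _ = ∏ i, {a | Maximal (P i) a}.encard := Set.encard_pi_eq_prod_encard

section Independent

variable {V : Type*}

theorem antitone_isIndep (G : SimpleGraph V) : Antitone G.IsIndep :=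
  fun _ _ hST hT => hT.mono hST

theorem isIndep_iSup_iff {ι : Sort*} {Gs : ι → SimpleGraph V} {S : Set V} :
    (⨆ i, Gs i).IsIndep S ↔ ∀ i, (Gs i).IsIndep S := by
  simp only [SimpleGraph.IsIndep, Set.Pairwise, SimpleGraph.iSup_adj, not_exists]
  exact ⟨fun h i _ hu _ hv huv => h hu hv huv i, fun h _ hu _ hv huv i => h i hu hv huv⟩

theorem nonempty_of_maximal_isIndep [Nonempty V] {G : SimpleGraph V} {S : Set V}
    (hS : Maximal G.IsIndep S) : S.Nonempty := by
  by_contra hne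
  obtain rfl := Set.not_nonempty_iff_eq_empty.1 hne
  obtain ⟨v⟩ := ‹Nonempty V›
  exact hS.le_of_ge (Set.pairwise_singleton v _) (Set.empty_subset _) (Set.mem_singleton v)

end Independent

theorem numMaximalIndep_iSup_le_prod {V : Type} [Fintype V] {ι : Type*} [Fintype ι]
    (Gs : ι → SimpleGraph V) :
    numMaximalIndep (⨆ i, Gs i) ≤ ∏ i, numMaximalIndep (Gs i) := by
  have cast_numMaximalIndep (G : SimpleGraph V) :
      (numMaximalIndep G : ℕ∞) = {S | Maximal G.IsIndep S}.encard :=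
    (Set.toFinite _).cast_ncard_eq
  have isIndep_iSup : (⨆ i, Gs i).IsIndep = fun S => ∀ i, (Gs i).IsIndep S :=
    funext fun S => propext isIndep_iSup_iff
  rw [← Nat.cast_le (α := ℕ∞), Nat.cast_prod]
  simp only [cast_numMaximalIndep, isIndep_iSup]
  exact encard_maximal_forall_le_prod fun i => antitone_isIndep (Gs i)

/-- `w` ranks the vertices of `G` compatibly with the vicinal preorder: the open neighbourhood of a
vertex lies inside the closed neighbourhood of every vertex of at least the same rank. This is the
only feature of the weights of a threshold graph that matters for counting maximal independent
sets. -/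
def IsVicinalRanking {V α : Type*} [LE α] (G : SimpleGraph V) (w : V → α) : Prop :=
  ∀ ⦃u v : V⦄, w u ≤ w v → G.neighborSet u ⊆ insert v (G.neighborSet v)

/-- The non-neighbours of `x` whose rank is at most that of `x`: the only candidate for a maximal
independent set in which `x` has the largest rank. -/
def lowerNonneighbors {V α : Type*} [LE α] (G : SimpleGraph V) (w : V → α) (x : V) : Set V :=
  {u | w u ≤ w x ∧ ¬ G.Adj u x}

namespace IsVicinalRanking

section Neighborhoods

variable {V α : Type*} {G : SimpleGraph V} {w : V → α} {S S' : Set V} {m m' x : V}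

theorem adj_of_le [LE α] (hw : IsVicinalRanking G w) {u v : V} (huv : w u ≤ w v) (hxv : x ≠ v)
    (hux : G.Adj u x) : G.Adj v x :=
  (hw huv hux).resolve_left hxv

theorem isIndep_lowerNonneighbors [LE α] (hw : IsVicinalRanking G w) (x : V) :
    G.IsIndep (lowerNonneighbors G w x) := by
  rintro u ⟨hux, hu⟩ v ⟨-, hv⟩ - huv
  have hvx : v ≠ x := fun h => hu (h ▸ huv)
  exact hv (hw.adj_of_le hux hvx huv).symm

theorem subset_lowerNonneighbors [Preorder α] (hw : IsVicinalRanking G w) (hS : G.IsIndep S)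
    (hmS : m ∈ S) (hmax : IsMaxOn w S m) (hmx : w m ≤ w x) (hadj : ¬ G.Adj m x) :
    S ⊆ lowerNonneighbors G w x := by
  intro u hu
  have hum : w u ≤ w m := hmax hu
  refine ⟨hum.trans hmx, fun hux => ?_⟩
  obtain rfl | hxm := eq_or_ne x m
  · exact hS hu hmS hux.ne hux
  · exact hadj (hw.adj_of_le hum hxm hux)

theorem eq_lowerNonneighbors [Preorder α] (hw : IsVicinalRanking G w)
    (hS : Maximal G.IsIndep S) (hmS : m ∈ S) (hmax : IsMaxOn w S m) (hmx : w m ≤ w x)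
    (hadj : ¬ G.Adj m x) : S = lowerNonneighbors G w x :=
  hS.eq_of_subset (hw.isIndep_lowerNonneighbors x)
    (hw.subset_lowerNonneighbors hS.prop hmS hmax hmx hadj)

theorem eq_of_not_adj [LinearOrder α] (hw : IsVicinalRanking G w)
    (hS : Maximal G.IsIndep S) (hmS : m ∈ S) (hmax : IsMaxOn w S m)
    (hS' : Maximal G.IsIndep S') (hmS' : m' ∈ S') (hmax' : IsMaxOn w S' m')
    (hadj : ¬ G.Adj m m') : S = S' := by
  wlog hle : w m ≤ w m' generalizing S S' m m'
  · exact (this hS' hmS' hmax' hS hmS hmax (fun h => hadj h.symm) (le_of_not_ge hle)).symm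
  calc S = lowerNonneighbors G w m' := hw.eq_lowerNonneighbors hS hmS hmax hle hadj
    _ = S' := (hw.eq_lowerNonneighbors hS' hmS' hmax' le_rfl G.irrefl).symm

end Neighborhoods

theorem numMaximalIndep_le_cliqueNum {V : Type} [Fintype V] [Nonempty V] {α : Type*}
    [LinearOrder α] {G : SimpleGraph V} {w : V → α} (hw : IsVicinalRanking G w) :
    numMaximalIndep G ≤ G.cliqueNum := by
  classical
  have exists_isMaxOn (S : Set V) (hS : Maximal G.IsIndep S) : ∃ m ∈ S, IsMaxOn w S m :=
    Set.exists_max_image S w S.toFinite (nonempty_of_maximal_isIndep hS)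
  choose! m hmem hmax using exists_isMaxOn
  have eq_of_not_adj_m {S S' : Set V} (hS : Maximal G.IsIndep S) (hS' : Maximal G.IsIndep S')
      (hadj : ¬ G.Adj (m S) (m S')) : S = S' :=
    hw.eq_of_not_adj hS (hmem S hS) (hmax S hS) hS' (hmem S' hS') (hmax S' hS') hadj
  have injOn_m : Set.InjOn m {S | Maximal G.IsIndep S} := fun S hS S' hS' h =>
    eq_of_not_adj_m hS hS' (h ▸ G.irrefl)
  have isClique_image : G.IsClique (m '' {S | Maximal G.IsIndep S}) := by
    rintro _ ⟨S, hS, rfl⟩ _ ⟨S', hS', rfl⟩ hne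
    by_contra hadj
    exact hne (congrArg m (eq_of_not_adj_m hS hS' hadj))
  rw [numMaximalIndep, ← injOn_m.ncard_image, Set.ncard_eq_toFinset_card']
  exact SimpleGraph.IsClique.card_le_cliqueNum (tc := by rwa [Set.coe_toFinset])

end IsVicinalRanking

theorem isVicinalRanking_of_adj_iff_lt_add {V α : Type*} [Add α] [Preorder α] [AddRightMono α]
    {G : SimpleGraph V} {w : V → α} {T : α}
    (hadj : ∀ u v, u ≠ v → (G.Adj u v ↔ T < w u + w v)) : IsVicinalRanking G w := by
  intro u v huv x hux
  refine (eq_or_ne x v).imp_right fun hxv => (hadj v x hxv.symm).2 ?_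
  calc T < w u + w x := (hadj u x hux.ne).1 hux
    _ ≤ w v + w x := by gcongr

theorem exists_isVicinalRanking_of_isThreshold {V : Type} [Fintype V] {G : SimpleGraph V}
    (hG : G.IsThreshold) : ∃ w : V → ℝ, IsVicinalRanking G w := by
  classical
  obtain ⟨w, T, -, -, hwT⟩ := hG
  refine ⟨w, isVicinalRanking_of_adj_iff_lt_add (T := T) fun u v huv => ?_⟩
  have isIndep_pair : G.IsIndep {u, v} ↔ ¬ G.Adj u v := by
    simp [SimpleGraph.IsIndep, Set.pairwise_pair, huv, G.adj_comm v u]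
  have sum_pair_le : w u + w v ≤ T ↔ G.IsIndep {u, v} := by
    simpa [Finset.sum_pair huv] using hwT {u, v}
  rw [← not_le, sum_pair_le, isIndep_pair, not_not]

theorem numMaximalIndep_le_cliqueNum_of_isThreshold {V : Type} [Fintype V] [Nonempty V]
    {G : SimpleGraph V} (hG : G.IsThreshold) : numMaximalIndep G ≤ G.cliqueNum :=
  let ⟨_, hw⟩ := exists_isVicinalRanking_of_isThreshold hG
  hw.numMaximalIndep_le_cliqueNum

/-- if the edge set of `G` (with at least one vertex) is the union
of the edge sets of threshold graphs `G_1, …, G_k`, then `G` has at most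
`ω(G_1)⋯ω(G_k)` maximal independent sets. -/
theorem numMaximalIndep_le_prod_cliqueNum_of_threshold_cover
    {V : Type} [Fintype V] [Nonempty V] {k : ℕ} (hk : 0 < k)
    (G : SimpleGraph V) (Gs : Fin k → SimpleGraph V)
    (hth : ∀ i, (Gs i).IsThreshold)
    (hcover : G = ⨆ i, Gs i) :
    numMaximalIndep G ≤ ∏ i, (Gs i).cliqueNum := by
  calc numMaximalIndep G = numMaximalIndep (⨆ i, Gs i) := by rw [hcover]
    _ ≤ ∏ i, numMaximalIndep (Gs i) := numMaximalIndep_iSup_le_prod Gs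
    _ ≤ ∏ i, (Gs i).cliqueNum :=
      Finset.prod_le_prod' fun i _ => numMaximalIndep_le_cliqueNum_of_isThreshold (hth i)
end
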